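/- Let C be a right R-module such that the injective dimension of C is finite and Ext^i_R(C^I, C) = 0 for every set I and all i ≥ 1, where C^I denotes the direct product of I copies of C. Then the following are equivalent: (a) there exist an injective cogenerator Q of the category of right R-modules and an exact sequence 0 → C_r → ⋯ → C_0 → Q → 0 in which each C_i belongs to Prod(C); (b) for every right R-module X with Ext^i_R(X, C) = 0 for all i ≥ 1, there exists a short exact sequence 0 → X → C_0 → X' → 0 with C_0 ∈ Prod(C) and Ext^i_R(X', C) = 0 for all i ≥ 1. -/

import Mathlib

open Function MulOpposite

universe u

noncomputable section

/-! ## Chain conditions -/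

/-- A ring is right coherent if every finitely generated right ideal is finitely presented. -/
def IsRightCoherentRing (R : Type u) [Ring R] : Prop :=
  ∀ I : Submodule Rᵐᵒᵖ R, I.FG → Module.FinitePresentation Rᵐᵒᵖ I

/-- A ring is left coherent if every finitely generated left ideal is finitely presented. -/
def IsLeftCoherentRing (S : Type u) [Ring S] : Prop :=
  ∀ I : Submodule S S, I.FG → Module.FinitePresentation S I

/-- A ring is right Noetherian if every right ideal is finitely generated. -/
def IsRightNoetherianRing (R : Type u) [Ring R] : Prop :=
  ∀ I : Submodule Rᵐᵒᵖ R, I.FG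

/-! ## The tensor product `N ⊗_S T` of a right `S`-module `N` with a left `S`-module `T` -/

section MTensor

variable (S : Type u) [Ring S]
variable (N : Type u) [AddCommGroup N] [Module Sᵐᵒᵖ N]
variable (T : Type u) [AddCommGroup T] [Module S T]

/-- The subgroup of balancing relations defining `N ⊗_S T` as a quotient of `T ⊗_ℤ N`. -/
def mtRel : AddSubgroup (TensorProduct ℤ T N) :=
  AddSubgroup.closure
    {x | ∃ (s : S) (t : T) (n : N), x = (s • t) ⊗ₜ[ℤ] n - t ⊗ₜ[ℤ] (op s • n)}

/-- `MTensor S N T` is the tensor product `N ⊗_S T` of a right `S`-module `N` with a left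
`S`-module `T`, realized as a quotient of `T ⊗_ℤ N`. -/
def MTensor : Type u := TensorProduct ℤ T N ⧸ mtRel S N T

instance : AddCommGroup (MTensor S N T) :=
  inferInstanceAs (AddCommGroup (TensorProduct ℤ T N ⧸ mtRel S N T))

variable {S N T}

/-- `MTensor.mk n t` is the element `n ⊗ t` of `N ⊗_S T`. -/
def MTensor.mk (n : N) (t : T) : MTensor S N T := QuotientAddGroup.mk (t ⊗ₜ[ℤ] n)

section Map

variable {N' : Type u} [AddCommGroup N'] [Module Sᵐᵒᵖ N']

/-- Functoriality of `N ⊗_S T` in the right `S`-module variable `N`. -/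
def MTensor.map (g : N →ₗ[Sᵐᵒᵖ] N') : MTensor S N T →+ MTensor S N' T :=
  QuotientAddGroup.map _ _
    (LinearMap.lTensor T g.toAddMonoidHom.toIntLinearMap).toAddMonoidHom
    (by
      refine (AddSubgroup.closure_le _).2 ?_
      rintro x ⟨s, t, n, rfl⟩
      simp only [SetLike.mem_coe, AddSubgroup.mem_comap, LinearMap.toAddMonoidHom_coe,
        map_sub, LinearMap.lTensor_tmul, AddMonoidHom.coe_toIntLinearMap,
        LinearMap.toAddMonoidHom_coe, map_smul]
      exact AddSubgroup.subset_closure ⟨s, t, g n, rfl⟩)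

end Map

section LMap

variable {T' : Type u} [AddCommGroup T'] [Module S T']

/-- Functoriality of `N ⊗_S T` in the left `S`-module variable `T`. -/
def MTensor.lmap (h : T →ₗ[S] T') : MTensor S N T →+ MTensor S N T' :=
  QuotientAddGroup.map _ _
    (LinearMap.rTensor N h.toAddMonoidHom.toIntLinearMap).toAddMonoidHom
    (by
      refine (AddSubgroup.closure_le _).2 ?_
      rintro x ⟨s, t, n, rfl⟩
      simp only [SetLike.mem_coe, AddSubgroup.mem_comap, LinearMap.toAddMonoidHom_coe,
        map_sub, LinearMap.rTensor_tmul, AddMonoidHom.coe_toIntLinearMap, map_smul]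
      exact AddSubgroup.subset_closure ⟨s, h t, n, rfl⟩)

end LMap

section Bimod

variable (R : Type u) [Ring R] [Module Rᵐᵒᵖ T] [SMulCommClass S Rᵐᵒᵖ T]

instance MTensor.instSMul : SMul Rᵐᵒᵖ (MTensor S N T) :=
  ⟨fun ρ =>
    QuotientAddGroup.map _ _ (DistribMulAction.toAddMonoidHom (TensorProduct ℤ T N) ρ)
      (by
        refine (AddSubgroup.closure_le _).2 ?_
        rintro x ⟨s, t, n, rfl⟩
        simp only [SetLike.mem_coe, AddSubgroup.mem_comap,
          DistribMulAction.toAddMonoidHom_apply, smul_sub, TensorProduct.smul_tmul']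
        exact AddSubgroup.subset_closure ⟨s, ρ • t, n, by rw [smul_comm s ρ t]⟩)⟩

instance MTensor.instModule : Module Rᵐᵒᵖ (MTensor S N T) :=
  Function.Surjective.module Rᵐᵒᵖ (QuotientAddGroup.mk' (mtRel S N T))
    (QuotientAddGroup.mk'_surjective _) (fun _ _ => rfl)

theorem MTensor.smul_mk (ρ : Rᵐᵒᵖ) (n : N) (t : T) :
    ρ • (MTensor.mk n t : MTensor S N T) = MTensor.mk n (ρ • t) := by
  show QuotientAddGroup.mk (ρ • (t ⊗ₜ[ℤ] n)) = QuotientAddGroup.mk ((ρ • t) ⊗ₜ[ℤ] n)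
  rw [TensorProduct.smul_tmul']

theorem MTensor.mk_add_right (n : N) (t t' : T) :
    (MTensor.mk n (t + t') : MTensor S N T) = MTensor.mk n t + MTensor.mk n t' := by
  show QuotientAddGroup.mk _ = _
  rw [TensorProduct.add_tmul]
  rfl

/-- The natural map `θ_N : N → Hom_R(T, N ⊗_S T)`, `n ↦ (t ↦ n ⊗ t)`. -/
def MTensor.theta (n : N) : T →ₗ[Rᵐᵒᵖ] MTensor S N T where
  toFun t := MTensor.mk n t
  map_add' t t' := MTensor.mk_add_right n t t'
  map_smul' ρ t := (MTensor.smul_mk R ρ n t).symm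

variable (S T N) in
/-- The natural map `θ_N : N → Hom_R(T, N ⊗_S T)` as a function. -/
def MTensor.thetaFun : N → (T →ₗ[Rᵐᵒᵖ] MTensor S N T) := fun n => MTensor.theta R n

end Bimod

end MTensor

/-! ## The right `S`-module structure on `Hom_A(T, M)` induced by a left `S`-action on `T` -/

section HomModule

variable {B A : Type u} [Ring B] [Ring A]
variable {T : Type u} [AddCommGroup T] [Module A T] [Module B T] [SMulCommClass B A T]
variable {M : Type u} [AddCommGroup M] [Module A M]

instance homDomSMul : SMul Bᵐᵒᵖ (T →ₗ[A] M) :=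
  ⟨fun b f =>
    { toFun := fun t => f (b.unop • t)
      map_add' := fun t t' => by
        show f (b.unop • (t + t')) = f (b.unop • t) + f (b.unop • t')
        rw [smul_add, map_add]
      map_smul' := fun a t => by
        show f (b.unop • a • t) = a • f (b.unop • t)
        rw [smul_comm b.unop a t, map_smul] }⟩

@[simp] theorem homDomSMul_apply (b : Bᵐᵒᵖ) (f : T →ₗ[A] M) (t : T) :
    (b • f) t = f (b.unop • t) := rfl

instance homDomModule : Module Bᵐᵒᵖ (T →ₗ[A] M) where
  one_smul f := LinearMap.ext fun t => by simp
  mul_smul b b' f := LinearMap.ext fun t => by simp [mul_smul]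
  smul_zero b := LinearMap.ext fun t => rfl
  smul_add b f g := LinearMap.ext fun t => rfl
  add_smul b b' f := LinearMap.ext fun t => by simp [add_smul]
  zero_smul f := LinearMap.ext fun t => by simp

end HomModule

/-! ## The evaluation map `ν_M : Hom_R(T, M) ⊗_S T → M` -/

section Nu

variable (S R : Type u) [Ring S] [Ring R]
variable (T : Type u) [AddCommGroup T] [Module S T] [Module Rᵐᵒᵖ T] [SMulCommClass S Rᵐᵒᵖ T]
variable (M : Type u) [AddCommGroup M] [Module Rᵐᵒᵖ M]

/-- The evaluation map `ν_M : Hom_R(T, M) ⊗_S T → M`, `f ⊗ t ↦ f t`. -/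
def MTensor.nuFun : MTensor S (T →ₗ[Rᵐᵒᵖ] M) T →+ M :=
  QuotientAddGroup.lift _
    (TensorProduct.liftAddHom
      { toFun := fun t =>
          { toFun := fun f : T →ₗ[Rᵐᵒᵖ] M => f t
            map_zero' := rfl
            map_add' := fun f g => rfl }
        map_zero' := AddMonoidHom.ext fun f => f.map_zero
        map_add' := fun t t' => AddMonoidHom.ext fun f => f.map_add t t' }
      (fun z t f => by
        show f (z • t) = (z • f) t
        rw [map_zsmul, LinearMap.smul_apply]))
    (by
      refine (AddSubgroup.closure_le _).2 ?_
      rintro x ⟨s, t, f, rfl⟩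
      simp only [SetLike.mem_coe, AddMonoidHom.mem_ker, map_sub,
        TensorProduct.liftAddHom_tmul, AddMonoidHom.coe_mk, ZeroHom.coe_mk]
      show f (s • t) - (op s • f) t = 0
      rw [homDomSMul_apply]
      simp)

end Nu


/-! ## Resolutions and derived-functor vanishing -/

/-- The data of a nonnegatively graded chain complex `⋯ → P 1 → P 0 → X` of `A`-modules. -/
structure ResolutionData (A : Type u) [Ring A] (X : Type u) [AddCommGroup X] [Module A X] :
    Type (u + 1) where
  P : ℕ → Type u
  [instAdd : ∀ n, AddCommGroup (P n)]
  [instMod : ∀ n, Module A (P n)]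
  d : ∀ n, P (n + 1) →ₗ[A] P n
  ε : P 0 →ₗ[A] X

attribute [instance] ResolutionData.instAdd ResolutionData.instMod

/-- The property of being a projective resolution. -/
structure ResolutionData.IsProjResolution {A : Type u} [Ring A] {X : Type u} [AddCommGroup X]
    [Module A X] (Q : ResolutionData A X) : Prop where
  proj : ∀ n, Module.Projective A (Q.P n)
  surj : Function.Surjective Q.ε
  exact0 : Function.Exact (Q.d 0) Q.ε
  exactSucc : ∀ n, Function.Exact (Q.d (n + 1)) (Q.d n)

/-- `X` has a resolution by finitely generated projective `A`-modules. -/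
def HasFGProjResolution (A : Type u) [Ring A] (X : Type u) [AddCommGroup X] [Module A X] : Prop :=
  ∃ Q : ResolutionData A X, Q.IsProjResolution ∧ ∀ n, Module.Finite A (Q.P n)

/-- `Ext^i_A(X, Y) = 0` for all `i ≥ 1`: some (equivalently, any) projective resolution of `X`
has `Hom_A(-, Y)`-complex exact at all positive degrees. -/
def ExtVanishAll (A : Type u) [Ring A] (X Y : Type u) [AddCommGroup X] [Module A X]
    [AddCommGroup Y] [Module A Y] : Prop :=
  ∃ Q : ResolutionData A X, Q.IsProjResolution ∧
    ∀ j : ℕ, Function.Exact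
      (fun f : Q.P j →ₗ[A] Y => f.comp (Q.d j))
      (fun f : Q.P (j + 1) →ₗ[A] Y => f.comp (Q.d (j + 1)))

/-- `Ext^1_A(X, Y) = 0`: every short exact sequence `0 → Y → E → X → 0` splits. -/
def Ext1Vanishes (A : Type u) [Ring A] (X Y : Type u) [AddCommGroup X] [Module A X]
    [AddCommGroup Y] [Module A Y] : Prop :=
  ∀ (E : Type u) [AddCommGroup E] [Module A E] (i : Y →ₗ[A] E) (p : E →ₗ[A] X),
    Function.Injective i → Function.Surjective p → Function.Exact i p →
      ∃ s : X →ₗ[A] E, p.comp s = LinearMap.id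

/-- `Tor^S_i(N, T) = 0` for all `i ≥ 1`: some (equivalently, any) projective resolution of the
right `S`-module `N` stays exact in positive degrees after applying `- ⊗_S T`. -/
def TorVanishAll (S : Type u) [Ring S] (N : Type u) [AddCommGroup N] [Module Sᵐᵒᵖ N]
    (T : Type u) [AddCommGroup T] [Module S T] : Prop :=
  ∃ Q : ResolutionData Sᵐᵒᵖ N, Q.IsProjResolution ∧
    ∀ j : ℕ, Function.Exact
      (⇑(MTensor.map (T := T) (Q.d (j + 1))))
      (⇑(MTensor.map (T := T) (Q.d j)))

/-! ## Homological dimensions -/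

/-- A surjection onto `M` from some module. -/
structure EpiOnto (A : Type u) [Ring A] (M : ModuleCat.{u} A) : Type (u + 1) where
  P : ModuleCat.{u} A
  f : P →ₗ[A] M
  surj : Function.Surjective f

/-- An injection of `M` into some module. -/
structure MonoInto (A : Type u) [Ring A] (M : ModuleCat.{u} A) : Type (u + 1) where
  E : ModuleCat.{u} A
  f : M →ₗ[A] E
  inj : Function.Injective f

/-- `HasClassResolution A 𝒞 n M` says that there is an exact sequence
`0 → C_n → ⋯ → C_0 → M → 0` with all `C_i` in the class `𝒞`. -/
def HasClassResolution (A : Type u) [Ring A] (C : ModuleCat.{u} A → Prop) :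
    ℕ → ModuleCat.{u} A → Prop
  | 0, M => C M
  | n + 1, M => ∃ e : EpiOnto A M, C e.P ∧
      HasClassResolution A C n (ModuleCat.of A (LinearMap.ker e.f))

/-- `HasClassCoresolution A 𝒞 n M` says that there is an exact sequence
`0 → M → C^0 → ⋯ → C^n → 0` with all `C^i` in the class `𝒞`. -/
def HasClassCoresolution (A : Type u) [Ring A] (C : ModuleCat.{u} A → Prop) :
    ℕ → ModuleCat.{u} A → Prop
  | 0, M => C M
  | n + 1, M => ∃ m : MonoInto A M, C m.E ∧
      HasClassCoresolution A C n (ModuleCat.of A ((↥m.E) ⧸ LinearMap.range m.f))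

/-- The projective dimension of `M` is at most `n`. -/
def ProjDimLE (A : Type u) [Ring A] (M : Type u) [AddCommGroup M] [Module A M] (n : ℕ) : Prop :=
  HasClassResolution A (fun P => Module.Projective A P) n (ModuleCat.of A M)

/-- The injective dimension of `M` is at most `n`. -/
def InjDimLE (A : Type u) [Ring A] (M : Type u) [AddCommGroup M] [Module A M] (n : ℕ) : Prop :=
  HasClassCoresolution A (fun E => Module.Injective A E) n (ModuleCat.of A M)

/-- A right `S`-module `N` is flat if `N ⊗_S -` preserves injections of left `S`-modules. -/
def IsFlatRightModule (S : Type u) [Ring S] (N : Type u) [AddCommGroup N] [Module Sᵐᵒᵖ N] :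
    Prop :=
  ∀ (X Y : Type u) [AddCommGroup X] [Module S X] [AddCommGroup Y] [Module S Y]
    (g : X →ₗ[S] Y), Function.Injective g →
      Function.Injective (MTensor.lmap (N := N) g)

/-- The flat dimension of the right `S`-module `N` is at most `n`. -/
def FlatDimLE (S : Type u) [Ring S] (N : Type u) [AddCommGroup N] [Module Sᵐᵒᵖ N] (n : ℕ) :
    Prop :=
  HasClassResolution Sᵐᵒᵖ (fun P => IsFlatRightModule S P) n (ModuleCat.of Sᵐᵒᵖ N)

/-! ## Gorenstein homological algebra -/

/-- The data of a `ℤ`-indexed complex of `A`-modules. -/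
structure ZComplex (A : Type u) [Ring A] : Type (u + 1) where
  P : ℤ → Type u
  [instAdd : ∀ i, AddCommGroup (P i)]
  [instMod : ∀ i, Module A (P i)]
  d : ∀ i, P i →ₗ[A] P (i + 1)

attribute [instance] ZComplex.instAdd ZComplex.instMod

/-- Exactness of a `ℤ`-indexed complex. -/
def ZComplex.IsExact {A : Type u} [Ring A] (C : ZComplex A) : Prop :=
  ∀ i, Function.Exact (C.d i) (C.d (i + 1))

/-- A module is Gorenstein projective if it is a kernel of a totally acyclic complex of
projective modules. -/
def IsGorensteinProjective (A : Type u) [Ring A] (N : Type u) [AddCommGroup N] [Module A N] :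
    Prop :=
  ∃ C : ZComplex A, (∀ i, Module.Projective A (C.P i)) ∧ C.IsExact ∧
    (∀ (Q : Type u) [AddCommGroup Q] [Module A Q], Module.Projective A Q →
      ∀ i, Function.Exact
        (fun f : C.P (i + 1 + 1) →ₗ[A] Q => f.comp (C.d (i + 1)))
        (fun f : C.P (i + 1) →ₗ[A] Q => f.comp (C.d i))) ∧
    Nonempty (N ≃ₗ[A] LinearMap.ker (C.d 0))

/-- A module is Gorenstein injective if it is a kernel of a totally acyclic complex of
injective modules. -/
def IsGorensteinInjective (A : Type u) [Ring A] (M : Type u) [AddCommGroup M] [Module A M] :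
    Prop :=
  ∃ C : ZComplex A, (∀ i, Module.Injective A (C.P i)) ∧ C.IsExact ∧
    (∀ (I : Type u) [AddCommGroup I] [Module A I], Module.Injective A I →
      ∀ i, Function.Exact
        (fun f : I →ₗ[A] C.P i => (C.d i).comp f)
        (fun f : I →ₗ[A] C.P (i + 1) => (C.d (i + 1)).comp f)) ∧
    Nonempty (M ≃ₗ[A] LinearMap.ker (C.d 0))

/-- A right `S`-module is Gorenstein flat if it is a kernel of a complex of flat right
`S`-modules which stays exact after tensoring with any injective left `S`-module. -/
def IsGorensteinFlat (S : Type u) [Ring S] (N : Type u) [AddCommGroup N] [Module Sᵐᵒᵖ N] :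
    Prop :=
  ∃ C : ZComplex Sᵐᵒᵖ, (∀ i, IsFlatRightModule S (C.P i)) ∧ C.IsExact ∧
    (∀ (I : Type u) [AddCommGroup I] [Module S I], Module.Injective S I →
      ∀ i, Function.Exact
        (⇑(MTensor.map (T := I) (C.d i)))
        (⇑(MTensor.map (T := I) (C.d (i + 1))))) ∧
    Nonempty (N ≃ₗ[Sᵐᵒᵖ] LinearMap.ker (C.d 0))

/-- The Gorenstein projective dimension of `N` is at most `n`. -/
def GpdLE (A : Type u) [Ring A] (N : Type u) [AddCommGroup N] [Module A N] (n : ℕ) : Prop :=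
  HasClassResolution A (fun P => IsGorensteinProjective A P) n (ModuleCat.of A N)

/-- The Gorenstein flat dimension of the right `S`-module `N` is at most `n`. -/
def GfdLE (S : Type u) [Ring S] (N : Type u) [AddCommGroup N] [Module Sᵐᵒᵖ N] (n : ℕ) : Prop :=
  HasClassResolution Sᵐᵒᵖ (fun P => IsGorensteinFlat S P) n (ModuleCat.of Sᵐᵒᵖ N)

/-- The Gorenstein injective dimension of `M` is at most `n`. -/
def GidLE (A : Type u) [Ring A] (M : Type u) [AddCommGroup M] [Module A M] (n : ℕ) : Prop :=
  HasClassCoresolution A (fun E => IsGorensteinInjective A E) n (ModuleCat.of A M)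

/-! ## Module classes `Prod(C)`, `Add(C)`, `add(C)` and (co)generators -/

/-- `M` is a retract (equivalently, a direct summand up to isomorphism) of `P`. -/
def IsRetractOf (A : Type u) [Ring A] (M P : Type u) [AddCommGroup M] [Module A M]
    [AddCommGroup P] [Module A P] : Prop :=
  ∃ (f : M →ₗ[A] P) (g : P →ₗ[A] M), g.comp f = LinearMap.id

/-- `Prod(C)`: direct summands of direct products of copies of `C`. -/
def InProdClass (A : Type u) [Ring A] (C : Type u) [AddCommGroup C] [Module A C]
    (M : ModuleCat.{u} A) : Prop :=
  ∃ I : Type u, IsRetractOf A M (I → C)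

/-- `Add(C)`: direct summands of direct sums of copies of `C`. -/
def InAddClass (A : Type u) [Ring A] (C : Type u) [AddCommGroup C] [Module A C]
    (M : ModuleCat.{u} A) : Prop :=
  ∃ I : Type u, IsRetractOf A M (I →₀ C)

/-- `add(C)`: direct summands of finite direct sums of copies of `C`. -/
def InFinAddClass (A : Type u) [Ring A] (C : Type u) [AddCommGroup C] [Module A C]
    (M : ModuleCat.{u} A) : Prop :=
  ∃ k : ℕ, IsRetractOf A M (Fin k → C)

/-- `Q` is an injective cogenerator: `Q` is injective and every module embeds into a direct
product of copies of `Q`. -/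
def IsInjectiveCogenerator (A : Type u) [Ring A] (Q : Type u) [AddCommGroup Q] [Module A Q] :
    Prop :=
  Module.Injective A Q ∧
    ∀ (M : Type u) [AddCommGroup M] [Module A M],
      ∃ (I : Type u) (f : M →ₗ[A] (I → Q)), Function.Injective f

/-- `E` is the minimal injective cogenerator: it is an injective cogenerator which is a direct
summand of every injective cogenerator. -/
def IsMinimalInjectiveCogenerator (A : Type u) [Ring A] (E : Type u) [AddCommGroup E]
    [Module A E] : Prop :=
  IsInjectiveCogenerator A E ∧
    ∀ (Q : Type u) [AddCommGroup Q] [Module A Q],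
      IsInjectiveCogenerator A Q → IsRetractOf A E Q

/-! ## Bimodules, homotheties, Wakamatsu tilting bimodules -/

section Bimodules

variable (S R : Type u) [Ring S] [Ring R]
variable (T : Type u) [AddCommGroup T] [Module S T] [Module Rᵐᵒᵖ T] [SMulCommClass S Rᵐᵒᵖ T]

/-- The natural map `S → End(T_R)` given by the left `S`-action. -/
def leftHomothety : S → (T →ₗ[Rᵐᵒᵖ] T) := fun s =>
  { toFun := fun t => s • t
    map_add' := fun t t' => smul_add s t t'
    map_smul' := fun ρ t => smul_comm s ρ t }

/-- The natural map `R → End(_S T)` given by the right `R`-action. -/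
def rightHomothety : R → (T →ₗ[S] T) := fun r =>
  { toFun := fun t => op r • t
    map_add' := fun t t' => smul_add (op r) t t'
    map_smul' := fun s t => (smul_comm s (op r) t).symm }

/-- A Wakamatsu tilting `(S, R)`-bimodule: `T` admits resolutions by finitely generated
projectives on both sides, the natural maps `S → End(T_R)` and `R → End(_S T)` are
isomorphisms, and `Ext^i(T, T) = 0` on both sides for all `i ≥ 1`. -/
structure IsWakamatsuTilting : Prop where
  fgProjResR : HasFGProjResolution Rᵐᵒᵖ T
  fgProjResS : HasFGProjResolution S T
  bijS : Function.Bijective (leftHomothety S R T)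
  bijR : Function.Bijective (rightHomothety S R T)
  extR : ExtVanishAll Rᵐᵒᵖ T T
  extS : ExtVanishAll S T T

/-- An `(S, R)`-bimodule `T` is tensorly faithful if `T ⊗_R M = 0` implies `M = 0` and
`N ⊗_S T = 0` implies `N = 0`. -/
def IsTensorlyFaithful : Prop :=
  (∀ (M : Type u) [AddCommGroup M] [Module R M],
      Subsingleton (MTensor R T M) → Subsingleton M) ∧
  (∀ (N : Type u) [AddCommGroup N] [Module Sᵐᵒᵖ N],
      Subsingleton (MTensor S N T) → Subsingleton N)

/-- Membership in the Auslander class `𝒜_T(S)`. -/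
structure InAuslanderClass (N : Type u) [AddCommGroup N] [Module Sᵐᵒᵖ N] : Prop where
  torVanish : TorVanishAll S N T
  extVanish : ExtVanishAll Rᵐᵒᵖ T (MTensor S N T)
  thetaBij : Function.Bijective (MTensor.thetaFun S N T R)

/-- Membership in the Bass class `ℬ_T(R)`. -/
structure InBassClass (M : Type u) [AddCommGroup M] [Module Rᵐᵒᵖ M] : Prop where
  extVanish : ExtVanishAll Rᵐᵒᵖ T M
  torVanish : TorVanishAll S (T →ₗ[Rᵐᵒᵖ] M) T
  nuBij : Function.Bijective (MTensor.nuFun S R T M)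

end Bimodules

/-! ## Cotilting and tilting modules -/

/-- A cotilting right `R`-module (Hügel–Coelho): finite injective dimension,
`Ext^{i≥1}_R(Cᴵ, C) = 0` for every index set `I`, and there is a finite exact sequence
`0 → C_r → ⋯ → C_0 → Q → 0` with all `C_i ∈ Prod(C)` and `Q` an injective cogenerator. -/
structure IsCotilting (R : Type u) [Ring R] (C : Type u) [AddCommGroup C] [Module Rᵐᵒᵖ C] :
    Prop where
  finInjDim : ∃ n, InjDimLE Rᵐᵒᵖ C n
  extProdVanish : ∀ I : Type u, ExtVanishAll Rᵐᵒᵖ (I → C) C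
  coresolution : ∃ (Q : ModuleCat.{u} Rᵐᵒᵖ) (r : ℕ),
    IsInjectiveCogenerator Rᵐᵒᵖ Q ∧ HasClassResolution Rᵐᵒᵖ (InProdClass Rᵐᵒᵖ C) r Q

/-- An `n`-tilting right `R`-module (Miyashita). -/
structure IsNTilting (R : Type u) [Ring R] (T : Type u) [AddCommGroup T] [Module Rᵐᵒᵖ T]
    (n : ℕ) : Prop where
  fgProjRes : HasFGProjResolution Rᵐᵒᵖ T
  projDim : ProjDimLE Rᵐᵒᵖ T n
  extVanish : ExtVanishAll Rᵐᵒᵖ T T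
  coresolution : HasClassCoresolution Rᵐᵒᵖ (InFinAddClass Rᵐᵒᵖ T) n (ModuleCat.of Rᵐᵒᵖ R)

/-- The data of a coresolution `0 → R → P 0 → P 1 → ⋯` of right `R`-modules. -/
structure WakamatsuCoresolutionData (R : Type u) [Ring R] : Type (u + 1) where
  P : ℕ → Type u
  [instAdd : ∀ n, AddCommGroup (P n)]
  [instMod : ∀ n, Module Rᵐᵒᵖ (P n)]
  f0 : R →ₗ[Rᵐᵒᵖ] P 0
  d : ∀ n, P n →ₗ[Rᵐᵒᵖ] P (n + 1)

attribute [instance] WakamatsuCoresolutionData.instAdd WakamatsuCoresolutionData.instMod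

/-- A Wakamatsu tilting right `R`-module: it admits a resolution by finitely generated
projective right `R`-modules, `Ext^{i≥1}_R(T, T) = 0`, and there is an exact sequence
`0 → R → T^0 → T^1 → ⋯` with each `T^i ∈ add(T)` and `Ext^1_R(Coker f, T) = 0` for every map
`f` in this sequence. -/
def IsWakamatsuTiltingModule (R : Type u) [Ring R] (T : Type u) [AddCommGroup T]
    [Module Rᵐᵒᵖ T] : Prop :=
  HasFGProjResolution Rᵐᵒᵖ T ∧ ExtVanishAll Rᵐᵒᵖ T T ∧
    ∃ W : WakamatsuCoresolutionData R,
      Function.Injective W.f0 ∧ Function.Exact W.f0 (W.d 0) ∧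
      (∀ n, Function.Exact (W.d n) (W.d (n + 1))) ∧
      (∀ n, InFinAddClass Rᵐᵒᵖ T (ModuleCat.of Rᵐᵒᵖ (W.P n))) ∧
      Ext1Vanishes Rᵐᵒᵖ ((W.P 0) ⧸ LinearMap.range W.f0) T ∧
      (∀ n, Ext1Vanishes Rᵐᵒᵖ ((W.P (n + 1)) ⧸ LinearMap.range (W.d n)) T)

open CategoryTheory Abelian

section ExtVanishing

variable {A : Type u} [Ring A]

/-- `Ext^i_A(X, Y) = 0` for all `i > k`, in terms of the `Ext`-groups of the category of
`A`-modules. -/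
def ExtVanishesAbove (k : ℕ) (X Y : ModuleCat.{u} A) : Prop :=
  ∀ i, k < i → ∀ e : Ext X Y i, e = 0

namespace ExtVanishesAbove

variable {S : ShortComplex (ModuleCat.{u} A)} {X Y : ModuleCat.{u} A} {k : ℕ}

theorem of_projective (h : Projective X) (k : ℕ) : ExtVanishesAbove k X Y := by
  rintro (_ | i) hi e
  · omega
  · exact e.eq_zero_of_projective

theorem of_injective (h : Injective Y) (k : ℕ) : ExtVanishesAbove k X Y := by
  rintro (_ | i) hi e
  · omega
  · exact e.eq_zero_of_injective

theorem X₁ (hS : S.ShortExact) (h₂ : ExtVanishesAbove k S.X₂ Y)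
    (h₃ : ExtVanishesAbove (k + 1) S.X₃ Y) : ExtVanishesAbove k S.X₁ Y := by
  intro i hi e
  obtain ⟨e₂, rfl⟩ := Ext.contravariant_sequence_exact₁ hS Y e rfl (h₃ _ (by omega) _)
  rw [h₂ i hi e₂, Ext.comp_zero]

theorem X₂ (hS : S.ShortExact) (h₁ : ExtVanishesAbove k S.X₁ Y)
    (h₃ : ExtVanishesAbove k S.X₃ Y) : ExtVanishesAbove k S.X₂ Y := by
  intro i hi e
  obtain ⟨e₃, rfl⟩ := Ext.contravariant_sequence_exact₂ hS Y e (h₁ i hi _)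
  rw [h₃ i hi e₃, Ext.comp_zero]

theorem X₃_of_extend (hS : S.ShortExact) (h₁ : ExtVanishesAbove 0 S.X₁ Y)
    (h₂ : ExtVanishesAbove 0 S.X₂ Y)
    (hext : ∀ g : S.X₁ ⟶ Y, ∃ h : S.X₂ ⟶ Y, S.f ≫ h = g) : ExtVanishesAbove 0 S.X₃ Y := by
  rintro (_ | _ | i) hi e
  · omega
  · obtain ⟨e₁, rfl⟩ := Ext.contravariant_sequence_exact₃ hS Y e (h₂ _ hi _) (n₀ := 0) rfl
    obtain ⟨g, rfl⟩ := (Ext.mk₀_bijective _ _).surjective e₁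
    obtain ⟨h, rfl⟩ := hext g
    rw [← Ext.mk₀_comp_mk₀, ← Ext.comp_assoc_of_second_deg_zero, hS.extClass_comp, Ext.zero_comp]
  · obtain ⟨e₁, rfl⟩ := Ext.contravariant_sequence_exact₃ hS Y e (h₂ _ hi _)
      (show 1 + (i + 1) = _ by omega)
    rw [h₁ _ (by omega) e₁, Ext.comp_zero]

theorem right_X₂ (hS : S.ShortExact) (h₁ : ExtVanishesAbove k X S.X₁)
    (h₃ : ExtVanishesAbove k X S.X₃) : ExtVanishesAbove k X S.X₂ := by
  intro i hi e
  obtain ⟨e₁, rfl⟩ := Ext.covariant_sequence_exact₂ X hS e (h₃ i hi _)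
  rw [h₁ i hi e₁, Ext.zero_comp]

theorem right_X₃ (hS : S.ShortExact) (h₁ : ExtVanishesAbove k X S.X₁)
    (h₂ : ExtVanishesAbove k X S.X₂) : ExtVanishesAbove k X S.X₃ := by
  intro i hi e
  obtain ⟨e₂, rfl⟩ := Ext.covariant_sequence_exact₃ X hS e rfl (h₁ _ (by omega) _)
  rw [h₂ i hi e₂, Ext.zero_comp]

theorem exists_extension (hS : S.ShortExact) (h : ExtVanishesAbove 0 S.X₃ Y) (g : S.X₁ ⟶ Y) :
    ∃ g' : S.X₂ ⟶ Y, S.f ≫ g' = g := by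
  obtain ⟨e, he⟩ := Ext.contravariant_sequence_exact₁ hS Y (Ext.mk₀ g) rfl (h 1 one_pos _)
  obtain ⟨g', rfl⟩ := (Ext.mk₀_bijective _ _).surjective e
  exact ⟨g', (Ext.mk₀_bijective _ _).injective (by rw [← he, Ext.mk₀_comp_mk₀])⟩

theorem exists_lift (hS : S.ShortExact) (h : ExtVanishesAbove 0 X S.X₁) (g : X ⟶ S.X₃) :
    ∃ g' : X ⟶ S.X₂, g' ≫ S.g = g := by
  obtain ⟨e, he⟩ := Ext.covariant_sequence_exact₃ X hS (Ext.mk₀ g) rfl (h 1 one_pos _)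
  obtain ⟨g', rfl⟩ := (Ext.mk₀_bijective _ _).surjective e
  exact ⟨g', (Ext.mk₀_bijective _ _).injective (by rw [← he, Ext.mk₀_comp_mk₀])⟩

theorem of_hasInjectiveDimensionLT {n : ℕ} (h : HasInjectiveDimensionLT Y (n + 1))
    (X : ModuleCat.{u} A) : ExtVanishesAbove n X Y :=
  fun _ hi e => e.eq_zero_of_hasInjectiveDimensionLT (n + 1) hi

end ExtVanishesAbove

/-! ### Comparison with the description by projective resolutions -/

/-- A resolution of `X` restricts to a resolution of the kernel of the augmentation. -/
def ResolutionData.tail {X : Type u} [AddCommGroup X] [Module A X] (Q : ResolutionData A X)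
    (hQ : Q.IsProjResolution) : ResolutionData A (LinearMap.ker Q.ε) where
  P n := Q.P (n + 1)
  d n := Q.d (n + 1)
  ε := (Q.d 0).codRestrict _ fun x => hQ.exact0.apply_apply_eq_zero x

theorem ResolutionData.IsProjResolution.tail {X : Type u} [AddCommGroup X] [Module A X]
    {Q : ResolutionData A X} (hQ : Q.IsProjResolution) : (Q.tail hQ).IsProjResolution where
  proj n := hQ.proj (n + 1)
  surj := by
    rintro ⟨x, hx⟩
    obtain ⟨y, rfl⟩ := (hQ.exact0 x).1 hx
    exact ⟨y, rfl⟩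
  exact0 x := Subtype.ext_iff.trans (hQ.exactSucc 0 x)
  exactSucc n := hQ.exactSucc (n + 1)

theorem ExtVanishAll.ext_eq_zero {Y : Type u} [AddCommGroup Y] [Module A Y] (i : ℕ) :
    ∀ {X : Type u} [AddCommGroup X] [Module A X], ExtVanishAll A X Y →
      ∀ e : Ext (ModuleCat.of A X) (ModuleCat.of A Y) (i + 1), e = 0 := by
  induction i with
  | zero =>
    rintro X _ _ ⟨Q, hQ, hex⟩ e
    have hS := LinearMap.shortExact_shortComplexKer hQ.surj
    have := hQ.proj 0
    obtain ⟨e₁, rfl⟩ := Ext.contravariant_sequence_exact₃ hS _ e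
      (Ext.eq_zero_of_projective (P := ModuleCat.of A (Q.P 0)) _) (n₀ := 0) rfl
    obtain ⟨g, rfl⟩ := (Ext.mk₀_bijective _ _).surjective e₁
    obtain ⟨h, hh⟩ := (hex 0 (g.hom.comp (Q.tail hQ).ε)).1 (by
      ext x
      have hx : (Q.tail hQ).ε (Q.d 1 x) = 0 :=
        Subtype.ext ((hQ.exactSucc 0).apply_apply_eq_zero x)
      change g.hom ((Q.tail hQ).ε (Q.d 1 x)) = 0
      rw [hx, map_zero])
    have hg : Q.ε.shortComplexKer.f ≫ ModuleCat.ofHom h = g := by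
      ext x
      obtain ⟨y, rfl⟩ := hQ.tail.surj x
      exact LinearMap.congr_fun hh y
    rw [← hg, ← Ext.mk₀_comp_mk₀, ← Ext.comp_assoc_of_second_deg_zero, hS.extClass_comp,
      Ext.zero_comp]
  | succ i ih =>
    rintro X _ _ ⟨Q, hQ, hex⟩ e
    have hS := LinearMap.shortExact_shortComplexKer hQ.surj
    have := hQ.proj 0
    obtain ⟨e₁, rfl⟩ := Ext.contravariant_sequence_exact₃ hS _ e
      (Ext.eq_zero_of_projective (P := ModuleCat.of A (Q.P 0)) _)
      (show 1 + (i + 1) = _ by omega)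
    have he₁ : e₁ = 0 := ih ⟨Q.tail hQ, hQ.tail, fun j => hex (j + 1)⟩ e₁
    rw [he₁, Ext.comp_zero]

theorem projective_projectiveShortComplex_X₂ (M : ModuleCat.{u} A) :
    Projective M.projectiveShortComplex.X₂ :=
  (IsProjective.iff_projective _).1
    (Module.Projective.of_free (P := M.projectiveShortComplex.X₂))

/-- The iterated syzygies in the standard free resolution of `M`. -/
def freeSyzygy (M : ModuleCat.{u} A) : ℕ → ModuleCat.{u} A
  | 0 => M
  | n + 1 => (freeSyzygy M n).projectiveShortComplex.X₁

/-- The standard free resolution of `M`. -/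
def freeResolutionData (M : ModuleCat.{u} A) : ResolutionData A M where
  P n := (freeSyzygy M n).projectiveShortComplex.X₂
  d n := (freeSyzygy M n).projectiveShortComplex.f.hom.comp
    (freeSyzygy M (n + 1)).projectiveShortComplex.g.hom
  ε := M.projectiveShortComplex.g.hom

theorem freeSyzygy_exact (M : ModuleCat.{u} A) (n : ℕ) :
    Function.Exact (freeSyzygy M n).projectiveShortComplex.f.hom
      (freeSyzygy M n).projectiveShortComplex.g.hom :=
  (ShortComplex.ShortExact.moduleCat_exact_iff_function_exact _).1
    (freeSyzygy M n).shortExact_projectiveShortComplex.exact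

theorem freeSyzygy_g_surjective (M : ModuleCat.{u} A) (n : ℕ) :
    Function.Surjective (freeSyzygy M n).projectiveShortComplex.g.hom :=
  (freeSyzygy M n).shortExact_projectiveShortComplex.moduleCat_surjective_g

theorem freeSyzygy_f_injective (M : ModuleCat.{u} A) (n : ℕ) :
    Function.Injective (freeSyzygy M n).projectiveShortComplex.f.hom :=
  (freeSyzygy M n).shortExact_projectiveShortComplex.moduleCat_injective_f

theorem freeResolutionData_isProjResolution (M : ModuleCat.{u} A) :
    (freeResolutionData M).IsProjResolution where
  proj n := (IsProjective.iff_projective _).2 (projective_projectiveShortComplex_X₂ (freeSyzygy M n))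
  surj := freeSyzygy_g_surjective M 0
  exact0 x := by
    refine (freeSyzygy_exact M 0 x).trans ⟨?_, ?_⟩
    · rintro ⟨y, rfl⟩
      obtain ⟨z, rfl⟩ := freeSyzygy_g_surjective M 1 y
      exact ⟨z, rfl⟩
    · rintro ⟨z, rfl⟩
      exact ⟨_, rfl⟩
  exactSucc n x := by
    have h : (freeResolutionData M).d n x = 0 ↔
        (freeSyzygy M (n + 1)).projectiveShortComplex.g.hom x = 0 :=
      map_eq_zero_iff _ (freeSyzygy_f_injective M n)
    refine (h.trans (freeSyzygy_exact M (n + 1) x)).trans ⟨?_, ?_⟩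
    · rintro ⟨y, rfl⟩
      obtain ⟨z, rfl⟩ := freeSyzygy_g_surjective M (n + 2) y
      exact ⟨z, rfl⟩
    · rintro ⟨z, rfl⟩
      exact ⟨_, rfl⟩

theorem ExtVanishesAbove.projectiveShortComplex {M Y : ModuleCat.{u} A} {k : ℕ}
    (h : ExtVanishesAbove (k + 1) M Y) : ExtVanishesAbove k M.projectiveShortComplex.X₁ Y :=
  .X₁ M.shortExact_projectiveShortComplex
    (.of_projective (projective_projectiveShortComplex_X₂ M) _) h

theorem ExtVanishesAbove.freeSyzygy {M Y : ModuleCat.{u} A} (h : ExtVanishesAbove 0 M Y) (n : ℕ) :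
    ExtVanishesAbove 0 (freeSyzygy M n) Y := by
  induction n with
  | zero => exact h
  | succ n ih => exact .projectiveShortComplex fun i hi => ih i (by omega)

theorem exists_comp_eq_of_ker_le {M N P : Type*} [AddCommGroup M] [Module A M] [AddCommGroup N]
    [Module A N] [AddCommGroup P] [Module A P] {p : M →ₗ[A] N} (hp : Function.Surjective p)
    (f : M →ₗ[A] P) (h : LinearMap.ker p ≤ LinearMap.ker f) : ∃ g : N →ₗ[A] P, g.comp p = f :=
  ⟨((LinearMap.ker p).liftQ f h).comp (p.quotKerEquivOfSurjective hp).symm.toLinearMap, by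
    ext x
    simp⟩

theorem extVanishAll_iff {X Y : Type u} [AddCommGroup X] [Module A X] [AddCommGroup Y]
    [Module A Y] :
    ExtVanishAll A X Y ↔ ExtVanishesAbove 0 (ModuleCat.of A X) (ModuleCat.of A Y) := by
  refine ⟨?_, fun h => ⟨freeResolutionData (.of A X), freeResolutionData_isProjResolution _, ?_⟩⟩
  · rintro h (_ | i) hi e
    · omega
    · exact h.ext_eq_zero i e
  · intro j f
    have hQ := freeResolutionData_isProjResolution (.of A X)
    refine ⟨fun hf => ?_, ?_⟩
    · have hker : LinearMap.ker (freeSyzygy (.of A X) (j + 1)).projectiveShortComplex.g.hom ≤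
          LinearMap.ker f := by
        intro x hx
        obtain ⟨y, rfl⟩ := (freeSyzygy_exact (.of A X) (j + 1) x).1 hx
        obtain ⟨z, rfl⟩ := freeSyzygy_g_surjective (.of A X) (j + 2) y
        exact LinearMap.congr_fun hf z
      obtain ⟨g, hg⟩ := exists_comp_eq_of_ker_le (freeSyzygy_g_surjective (.of A X) (j + 1)) f hker
      obtain ⟨g', hg'⟩ := ExtVanishesAbove.exists_extension
        (freeSyzygy (.of A X) j).shortExact_projectiveShortComplex (h.freeSyzygy j)
        (ModuleCat.ofHom g)
      refine ⟨g'.hom, ?_⟩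
      rw [← hg]
      ext x
      exact ConcreteCategory.congr_hom hg' _
    · rintro ⟨g, rfl⟩
      ext x
      change g ((freeResolutionData (.of A X)).d j ((freeResolutionData (.of A X)).d (j + 1) x)) = 0
      rw [(hQ.exactSucc j).apply_apply_eq_zero x, map_zero]

/-! ### Modules with finite `Prod(C)`-resolutions -/

variable {C : Type u} [AddCommGroup C] [Module A C]

theorem InProdClass.of_isRetractOf {M N : ModuleCat.{u} A} (h : IsRetractOf A M N)
    (hN : InProdClass A C N) : InProdClass A C M := by
  obtain ⟨f, g, hfg⟩ := h
  obtain ⟨I, f', g', hfg'⟩ := hN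
  refine ⟨I, f'.comp f, g.comp g', ?_⟩
  rw [LinearMap.comp_assoc, ← LinearMap.comp_assoc f, hfg', LinearMap.id_comp, hfg]

theorem inProdClass_of_subsingleton (M : ModuleCat.{u} A) [Subsingleton M] :
    InProdClass A C M :=
  ⟨PEmpty, 0, 0, LinearMap.ext fun _ => Subsingleton.elim _ _⟩

theorem ExtVanishAll.inProdClass {X : Type u} [AddCommGroup X] [Module A X]
    (h : ExtVanishAll A X C) {M : ModuleCat.{u} A} (hM : InProdClass A C M) :
    ExtVanishAll A X M := by
  obtain ⟨Q, hQ, hex⟩ := h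
  obtain ⟨I, s, r, hrs⟩ := hM
  refine ⟨Q, hQ, fun j f => ⟨fun hf => ?_, ?_⟩⟩
  · have key (i : I) : ∃ g : Q.P j →ₗ[A] C, g.comp (Q.d j) = (LinearMap.proj i).comp (s.comp f) :=
      (hex j _).1 (by
        change ((LinearMap.proj i).comp (s.comp f)).comp (Q.d (j + 1)) = 0
        rw [LinearMap.comp_assoc, LinearMap.comp_assoc]
        rw [show f.comp (Q.d (j + 1)) = 0 from hf, LinearMap.comp_zero, LinearMap.comp_zero])
    choose g hg using key
    refine ⟨r.comp (LinearMap.pi g), LinearMap.ext fun x => ?_⟩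
    have hx : LinearMap.pi g (Q.d j x) = s (f x) :=
      funext fun i => LinearMap.congr_fun (hg i) x
    change r (LinearMap.pi g (Q.d j x)) = f x
    rw [hx]
    exact LinearMap.congr_fun hrs (f x)
  · rintro ⟨g, rfl⟩
    ext x
    change g (Q.d j (Q.d (j + 1) x)) = 0
    rw [(hQ.exactSucc j).apply_apply_eq_zero x, map_zero]

theorem ExtVanishesAbove.right_inProdClass {X M : ModuleCat.{u} A}
    (h : ExtVanishesAbove 0 X (.of A C)) (hM : InProdClass A C M) : ExtVanishesAbove 0 X M :=
  extVanishAll_iff.1 ((extVanishAll_iff.2 h).inProdClass hM)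

theorem ExtVanishesAbove.right_of_hasClassResolution {X : ModuleCat.{u} A}
    (h : ExtVanishesAbove 0 X (.of A C)) {n : ℕ} {M : ModuleCat.{u} A}
    (hM : HasClassResolution A (InProdClass A C) n M) : ExtVanishesAbove 0 X M := by
  induction n generalizing M with
  | zero => exact h.right_inProdClass hM
  | succ n ih =>
    obtain ⟨e, he, hker⟩ := hM
    exact .right_X₃ (LinearMap.shortExact_shortComplexKer e.surj) (ih hker)
      (h.right_inProdClass he)

theorem HasClassResolution.congr {n : ℕ} {M N : ModuleCat.{u} A} (φ : M ≃ₗ[A] N)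
    (hM : HasClassResolution A (InProdClass A C) n M) :
    HasClassResolution A (InProdClass A C) n N := by
  cases n with
  | zero =>
    exact .of_isRetractOf ⟨φ.symm.toLinearMap, φ.toLinearMap, LinearMap.ext fun x => by simp⟩ hM
  | succ n =>
    obtain ⟨e, he, hker⟩ := hM
    refine ⟨⟨e.P, φ.toLinearMap.comp e.f, φ.surjective.comp e.surj⟩, he, ?_⟩
    have h : LinearMap.ker (φ.toLinearMap.comp e.f) = LinearMap.ker e.f := by
      rw [LinearMap.ker_comp, LinearEquiv.ker, Submodule.comap_bot]
    rw [h]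
    exact hker

theorem InjDimLE.hasInjectiveDimensionLT {n : ℕ} {M : ModuleCat.{u} A}
    (h : HasClassCoresolution A (fun E => Module.Injective A E) n M) :
    HasInjectiveDimensionLT M (n + 1) := by
  induction n generalizing M with
  | zero =>
    have : Module.Injective A M := h
    have := Module.injective_object_of_injective_module A M
    infer_instance
  | succ n ih =>
    obtain ⟨m, hm, hq⟩ := h
    have hm' : Module.Injective A m.E := hm
    have := Module.injective_object_of_injective_module A m.E
    let S := ModuleCat.shortComplexOfCompEqZero m.f (LinearMap.range m.f).mkQ
      (by ext x; simp)
    have hS : S.ShortExact := ModuleCat.shortComplex_shortExact S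
      (fun x => by simp [S]) m.inj (Submodule.mkQ_surjective _)
    have h₂ : HasInjectiveDimensionLT S.X₂ 1 := inferInstanceAs (HasInjectiveDimensionLT m.E 1)
    exact hS.hasInjectiveDimensionLT_X₁ (n + 1) (ih hq)
      (hasInjectiveDimensionLT_of_ge S.X₂ 1 (n + 1 + 1) (by omega))

/-- Every module category has an injective cogenerator. -/
theorem exists_isInjectiveCogenerator (A : Type u) [Ring A] :
    ∃ Q : ModuleCat.{u} A, IsInjectiveCogenerator A Q := by
  have key (I : Ideal A) : ∃ (E : ModuleCat.{u} A) (f : (A ⧸ I) →ₗ[A] E),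
      Module.Injective A E ∧ Function.Injective f := by
    obtain ⟨E, hE, f, hf⟩ := EnoughInjectives.presentation (ModuleCat.of A (A ⧸ I))
    exact ⟨E, f.hom, Module.injective_module_of_injective_object A E,
      (ModuleCat.mono_iff_injective f).1 hf⟩
  choose E f hE hf using key
  have hQ : Module.Injective A (∀ I, E I) := inferInstance
  refine ⟨.of A (∀ I, E I), hQ, fun M _ _ => ⟨M →ₗ[A] ∀ I, E I, LinearMap.pi id, ?_⟩⟩
  rw [injective_iff_map_eq_zero]
  intro m hm
  let I : Ideal A := LinearMap.ker (LinearMap.toSpanSingleton A M m)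
  let i : (A ⧸ I) →ₗ[A] M := I.liftQ (LinearMap.toSpanSingleton A M m) le_rfl
  have hi : Function.Injective i := LinearMap.ker_eq_bot.1 (Submodule.ker_liftQ_eq_bot' _ _ rfl)
  obtain ⟨g, hg⟩ := Module.Injective.extension_property A (E I) _ _ i hi (f I)
  have h1 : g (i (Submodule.Quotient.mk 1)) = f I (Submodule.Quotient.mk 1) :=
    LinearMap.congr_fun hg _
  have him : i (Submodule.Quotient.mk 1) = m := by simp [i]
  classical
  have h2 := congr_fun (congr_fun hm ((LinearMap.single A (fun J => E J) I).comp g)) I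
  have h3 : g m = 0 :=
    (Pi.single_eq_same (M := fun J => (E J : Type u)) I (g m)).symm.trans h2
  rw [him, h3] at h1
  have h4 := (map_eq_zero_iff _ (hf I)).1 h1.symm
  rw [← him, h4, map_zero]

variable (A C) in
/-- Every module in the left `Ext`-orthogonal class of `C` embeds into a module in `Prod(C)` with
cokernel in that same class. -/
def HasSpecialProdPreenvelopes : Prop :=
  ∀ (X : Type u) [AddCommGroup X] [Module A X], ExtVanishAll A X C →
    ∃ (C₀ : ModuleCat.{u} A) (f : X →ₗ[A] C₀), Function.Injective f ∧ InProdClass A C C₀ ∧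
      ExtVanishAll A (C₀ ⧸ LinearMap.range f) C

theorem HasClassResolution.exists_inProdClass_cover {n : ℕ} {Q : ModuleCat.{u} A}
    (hQ : HasClassResolution A (InProdClass A C) n Q) :
    ∃ (D : ModuleCat.{u} A) (p : D →ₗ[A] Q), InProdClass A C D ∧ Function.Surjective p ∧
      ∃ r, HasClassResolution A (InProdClass A C) r (.of A (LinearMap.ker p)) := by
  cases n with
  | zero =>
    refine ⟨Q, LinearMap.id, hQ, Function.surjective_id, 0, ?_⟩
    have : Subsingleton (LinearMap.ker (LinearMap.id (R := A) (M := Q))) := by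
      rw [LinearMap.ker_id]; infer_instance
    exact inProdClass_of_subsingleton _
  | succ n =>
    obtain ⟨e, he, hker⟩ := hQ
    exact ⟨e.P, e.f, he, e.surj, n, hker⟩

theorem exists_map_ne_zero {n : ℕ} {Q : ModuleCat.{u} A} (hQ : IsInjectiveCogenerator A Q)
    (hres : HasClassResolution A (InProdClass A C) n Q) {X : Type u} [AddCommGroup X] [Module A X]
    (hX : ExtVanishAll A X C) {x : X} (hx : x ≠ 0) : ∃ φ : X →ₗ[A] C, φ x ≠ 0 := by
  obtain ⟨D, p, ⟨J, s, r, hrs⟩, hp, m, hker⟩ := hres.exists_inProdClass_cover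
  obtain ⟨I, g, hg⟩ := hQ.2 X
  obtain ⟨i, hi⟩ := Function.ne_iff.1 ((map_ne_zero_iff g hg).2 hx)
  obtain ⟨h, hh⟩ := ((extVanishAll_iff.1 hX).right_of_hasClassResolution hker).exists_lift
    (LinearMap.shortExact_shortComplexKer hp) (ModuleCat.ofHom ((LinearMap.proj i).comp g))
  have hpx : p (h.hom x) = g x i := ConcreteCategory.congr_hom hh x
  have hhx : h.hom x ≠ 0 := fun h0 => hi (by rw [← hpx, h0, map_zero]; rfl)
  have hs : Function.Injective s :=
    Function.LeftInverse.injective (g := r) (LinearMap.congr_fun hrs)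
  obtain ⟨j, hj⟩ := Function.ne_iff.1 ((map_ne_zero_iff s hs).2 hhx)
  exact ⟨(LinearMap.proj j).comp (s.comp h.hom), hj⟩

theorem hasSpecialProdPreenvelopes_of_hasClassResolution
    (hext : ∀ I : Type u, ExtVanishAll A (I → C) C) {n : ℕ} {Q : ModuleCat.{u} A}
    (hQ : IsInjectiveCogenerator A Q) (hres : HasClassResolution A (InProdClass A C) n Q) :
    HasSpecialProdPreenvelopes A C := by
  intro X _ _ hX
  let ev : X →ₗ[A] ((X →ₗ[A] C) → C) := LinearMap.pi id
  have hev : Function.Injective ev := by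
    rw [injective_iff_map_eq_zero]
    intro x hx
    by_contra hx0
    obtain ⟨φ, hφ⟩ := exists_map_ne_zero hQ hres hX hx0
    exact hφ (congr_fun hx φ)
  refine ⟨.of A ((X →ₗ[A] C) → C), ev, hev, ⟨_, LinearMap.id, LinearMap.id, rfl⟩, ?_⟩
  let S := ModuleCat.shortComplexOfCompEqZero ev (LinearMap.range ev).mkQ (by ext x; simp)
  have hS : S.ShortExact := ModuleCat.shortComplex_shortExact S
    (fun x => by simp [S]) hev (Submodule.mkQ_surjective _)
  exact extVanishAll_iff.2 <| .X₃_of_extend hS (extVanishAll_iff.1 hX)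
    (extVanishAll_iff.1 (hext _)) fun g => ⟨ModuleCat.ofHom (LinearMap.proj g.hom), rfl⟩

/-- The Auslander–Buchweitz approximation: a module `M` such that `Ext^i(M, C)` vanishes for large
`i` is a quotient of a module in the left `Ext`-orthogonal class of `C` by a module with a finite
`Prod(C)`-resolution. -/
theorem HasSpecialProdPreenvelopes.exists_approximation (hC : HasSpecialProdPreenvelopes A C)
    {k : ℕ} {M : ModuleCat.{u} A} (hM : ExtVanishesAbove k M (.of A C)) :
    ∃ (X : ModuleCat.{u} A) (p : X →ₗ[A] M), ExtVanishesAbove 0 X (.of A C) ∧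
      Function.Surjective p ∧
      ∃ r, HasClassResolution A (InProdClass A C) r (.of A (LinearMap.ker p)) := by
  induction k generalizing M with
  | zero =>
    refine ⟨M, LinearMap.id, hM, Function.surjective_id, 0, ?_⟩
    have : Subsingleton (LinearMap.ker (LinearMap.id (R := A) (M := M))) := by
      rw [LinearMap.ker_id]; infer_instance
    exact inProdClass_of_subsingleton _
  | succ k ih =>
    obtain ⟨X', p', hX', hp', r, hr⟩ := ih hM.projectiveShortComplex
    obtain ⟨C₀, f, hf, hC₀, hcoker⟩ := hC X' (extVanishAll_iff.2 hX')
    let P := M.projectiveShortComplex.X₂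
    let π : P →ₗ[A] M := M.projectiveShortComplex.g.hom
    let j : M.projectiveShortComplex.X₁ →ₗ[A] P := M.projectiveShortComplex.f.hom
    have hπ : Function.Surjective π :=
      M.shortExact_projectiveShortComplex.moduleCat_surjective_g
    have hj : Function.Injective j := M.shortExact_projectiveShortComplex.moduleCat_injective_f
    have hjπ : Function.Exact j π :=
      (ShortComplex.ShortExact.moduleCat_exact_iff_function_exact _).1
        M.shortExact_projectiveShortComplex.exact
    -- The pushout of `P` and `C₀` along `X'`.
    let ρ : X' →ₗ[A] P × C₀ := (j.comp p').prod (-f)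
    let N : Submodule A (P × C₀) := LinearMap.range ρ
    let q : ((P × C₀) ⧸ N) →ₗ[A] M := N.liftQ (π.comp (LinearMap.fst A P C₀)) (by
      rintro _ ⟨x, rfl⟩
      exact hjπ.apply_apply_eq_zero (p' x))
    have hq : Function.Surjective q := fun m => by
      obtain ⟨y, rfl⟩ := hπ m
      exact ⟨Submodule.Quotient.mk (y, (0 : C₀)), rfl⟩
    refine ⟨.of A ((P × C₀) ⧸ N), q, ?_, hq, r + 1, ?_⟩
    · let a : P →ₗ[A] ((P × C₀) ⧸ N) := N.mkQ.comp (LinearMap.inl A P C₀)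
      let b : ((P × C₀) ⧸ N) →ₗ[A] (C₀ ⧸ LinearMap.range f) :=
        N.liftQ ((LinearMap.range f).mkQ.comp (LinearMap.snd A P C₀)) (by
          rintro _ ⟨x, rfl⟩
          change (LinearMap.range f).mkQ (-f x) = 0
          simp)
      let S := ModuleCat.shortComplexOfCompEqZero a b (by
        ext y
        change (LinearMap.range f).mkQ 0 = 0
        simp)
      have hS : S.ShortExact := by
        refine ModuleCat.shortComplex_shortExact S ?_ ?_ ?_
        · intro z
          refine ⟨?_, ?_⟩
          · obtain ⟨⟨y, c⟩, rfl⟩ := N.mkQ_surjective z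
            intro hz
            have hc : (LinearMap.range f).mkQ c = 0 := hz
            obtain ⟨x, rfl⟩ := (Submodule.Quotient.mk_eq_zero _).1 hc
            refine ⟨y + j (p' x), (Submodule.Quotient.eq N).2 ⟨x, ?_⟩⟩
            simp [ρ]
          · rintro ⟨y, rfl⟩
            exact map_zero (LinearMap.range f).mkQ
        · refine (injective_iff_map_eq_zero a).2 fun y hy => ?_
          obtain ⟨x, hx⟩ := (Submodule.Quotient.mk_eq_zero N).1 hy
          have hx0 : x = 0 := hf (by
            rw [map_zero, ← neg_eq_zero]
            exact congr_arg Prod.snd hx)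
          rw [← show j (p' x) = y from congr_arg Prod.fst hx, hx0, map_zero, map_zero]
        · intro z
          obtain ⟨c, rfl⟩ := (LinearMap.range f).mkQ_surjective z
          exact ⟨N.mkQ ((0 : P), c), rfl⟩
      exact .X₂ hS (.of_projective (projective_projectiveShortComplex_X₂ M) 0)
        (extVanishAll_iff.1 hcoker)
    · let t : C₀ →ₗ[A] LinearMap.ker q :=
        (N.mkQ.comp (LinearMap.inr A P C₀)).codRestrict _ fun c => map_zero π
      have ht : Function.Surjective t := by
        rintro ⟨z, hz⟩
        obtain ⟨⟨y, c⟩, rfl⟩ := N.mkQ_surjective z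
        obtain ⟨m, rfl⟩ := (hjπ y).1 hz
        obtain ⟨x, rfl⟩ := hp' m
        refine ⟨c + f x, Subtype.ext ((Submodule.Quotient.eq N).2 ⟨-x, ?_⟩)⟩
        simp [ρ]
      have hmem (x : LinearMap.ker p') : t (f x) = 0 := by
        refine Subtype.ext ((Submodule.Quotient.mk_eq_zero N).2 ⟨-x, ?_⟩)
        simp [ρ]
      let φ : LinearMap.ker p' →ₗ[A] LinearMap.ker t :=
        (f.comp (LinearMap.ker p').subtype).codRestrict _ hmem
      have hφ : Function.Bijective φ := by
        refine ⟨fun x y hxy => Subtype.ext (hf (congr_arg Subtype.val hxy)), ?_⟩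
        rintro ⟨c, hc⟩
        obtain ⟨x, hx⟩ := (Submodule.Quotient.mk_eq_zero N).1 (congr_arg Subtype.val hc)
        have hx1 : p' x = 0 := hj (by
          rw [map_zero]
          exact congr_arg Prod.fst hx)
        have hx2 : -f x = c := congr_arg Prod.snd hx
        exact ⟨⟨-x, by simp [hx1]⟩, Subtype.ext ((map_neg f x).trans hx2)⟩
      exact ⟨⟨C₀, t, ht⟩, hC₀, hr.congr (LinearEquiv.ofBijective φ hφ)⟩

theorem HasSpecialProdPreenvelopes.exists_hasClassResolution
    (hC : HasSpecialProdPreenvelopes A C) {n : ℕ} (hid : InjDimLE A C n) {Q : ModuleCat.{u} A}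
    (hQ : Module.Injective A Q) : ∃ r, HasClassResolution A (InProdClass A C) r Q := by
  obtain ⟨X, p, hX, hp, r, hr⟩ := hC.exists_approximation
    (.of_hasInjectiveDimensionLT (InjDimLE.hasInjectiveDimensionLT hid) Q)
  obtain ⟨C₀, f, hf, hC₀, hcoker⟩ := hC X (extVanishAll_iff.2 hX)
  have hcoker' := extVanishAll_iff.1 hcoker
  have hsplit : ExtVanishesAbove 0 (.of A (C₀ ⧸ LinearMap.range f)) X :=
    .right_X₂ (LinearMap.shortExact_shortComplexKer hp) (hcoker'.right_of_hasClassResolution hr)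
      (.of_injective (Module.injective_object_of_injective_module A Q) 0)
  let S := ModuleCat.shortComplexOfCompEqZero f (LinearMap.range f).mkQ (by ext x; simp)
  have hS : S.ShortExact := ModuleCat.shortComplex_shortExact S
    (fun x => by simp [S]) hf (Submodule.mkQ_surjective _)
  obtain ⟨g, hg⟩ := hsplit.exists_extension hS (𝟙 X)
  have hXC : InProdClass A C X :=
    .of_isRetractOf ⟨f, g.hom, congr_arg ModuleCat.Hom.hom hg⟩ hC₀
  exact ⟨r + 1, ⟨X, p, hp⟩, hXC, hr⟩

end ExtVanishing

/-- Let `C` be a right `R`-module of finite injective dimension with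
`Ext^{i≥1}_R(Cᴵ, C) = 0` for every set `I`. Then `(a)` there are an injective cogenerator
`Q` and a finite exact sequence `0 → C_r → ⋯ → C_0 → Q → 0` with all `C_i ∈ Prod(C)` iff
`(b)` every `X` with `Ext^{i≥1}_R(X, C) = 0` fits in a short exact sequence
`0 → X → C_0 → X' → 0` with `C_0 ∈ Prod(C)` and `Ext^{i≥1}_R(X', C) = 0`. -/
theorem cotilting_coresolution_iff_special_preenvelopes
    (R : Type u) [Ring R]
    (C : Type u) [AddCommGroup C] [Module Rᵐᵒᵖ C]
    (hid : ∃ n, InjDimLE Rᵐᵒᵖ C n)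
    (hext : ∀ I : Type u, ExtVanishAll Rᵐᵒᵖ (I → C) C) :
    (∃ (Q : ModuleCat.{u} Rᵐᵒᵖ) (r : ℕ), IsInjectiveCogenerator Rᵐᵒᵖ Q ∧
        HasClassResolution Rᵐᵒᵖ (InProdClass Rᵐᵒᵖ C) r Q) ↔
    (∀ (X : Type u) [AddCommGroup X] [Module Rᵐᵒᵖ X], ExtVanishAll Rᵐᵒᵖ X C →
      ∃ (C₀ : ModuleCat.{u} Rᵐᵒᵖ) (f : X →ₗ[Rᵐᵒᵖ] (C₀ : Type u)),
        Function.Injective f ∧ InProdClass Rᵐᵒᵖ C C₀ ∧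
        ExtVanishAll Rᵐᵒᵖ ((C₀ : Type u) ⧸ LinearMap.range f) C) := by
  obtain ⟨n, hn⟩ := hid
  refine ⟨fun ⟨Q, r, hQ, hres⟩ => hasSpecialProdPreenvelopes_of_hasClassResolution hext hQ hres,
    fun h => ?_⟩
  obtain ⟨Q, hQ⟩ := exists_isInjectiveCogenerator Rᵐᵒᵖ
  obtain ⟨r, hr⟩ := HasSpecialProdPreenvelopes.exists_hasClassResolution h hn hQ.1
  exact ⟨Q, r, hQ, hr⟩
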